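/- Let granular-balls be indexed by a nonempty finite set J with centers c_i : ι → ℝ, positive sizes w_i > 0, decision classes d_i in a finite nonempty set L with the assignment i ↦ d_i non-constant, and let C > 0. If B₁ ⊆ B₂ are finite attribute subsets of ι, then the weighted granular-ball fuzzy dependency is monotone: W∂^C_{B₁} ≤ W∂^C_{B₂}, where W∂^C_B = (∑_{j ∈ J} w_j · POS^C_B(j)) / (∑_{j ∈ J} w_j). (Property 3.) -/

import Mathlib

open Finset

/-- Partial Euclidean distance over an attribute subset `B`. -/
noncomputable def pdist {ι : Type*} (B : Finset ι) (x y : ι → ℝ) : ℝ :=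
  Real.sqrt (∑ k ∈ B, (x k - y k) ^ 2)

/-- If the decision-class assignment is non-constant, then for every class `t`
the set of balls whose class differs from `t` is nonempty. -/
lemma filter_ne_nonempty {J L : Type*} [Fintype J] [DecidableEq L] (d : J → L)
    (hd : ∃ i₁ i₂, d i₁ ≠ d i₂) (t : L) :
    (Finset.univ.filter (fun i => d i ≠ t)).Nonempty := by
  obtain ⟨i₁, i₂, h⟩ := hd
  by_cases h1 : d i₁ = t
  · exact ⟨i₂, Finset.mem_filter.mpr ⟨Finset.mem_univ _, fun he => h (h1.trans he.symm)⟩⟩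
  · exact ⟨i₁, Finset.mem_filter.mpr ⟨Finset.mem_univ _, h1⟩⟩

/-- Granular-ball fuzzy positive-region membership of ball `j`:
`POS^C_B(j) = max_{t ∈ L} (1/√C) · min_{i : d i ≠ t} Δ_B(c i, c j)`. -/
noncomputable def pos {ι J L : Type*} [Fintype J] [Fintype L] [Nonempty L] [DecidableEq L]
    (c : J → ι → ℝ) (d : J → L) (hd : ∃ i₁ i₂, d i₁ ≠ d i₂)
    (C : ℝ) (B : Finset ι) (j : J) : ℝ :=
  Finset.univ.sup' Finset.univ_nonempty fun t : L =>
    (1 / Real.sqrt C) *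
      (Finset.univ.filter fun i => d i ≠ t).inf' (filter_ne_nonempty d hd t)
        (fun i => pdist B (c i) (c j))

/-- Weighted granular-ball fuzzy dependency
`W∂^C_B = (∑_j w_j · POS^C_B(j)) / (∑_j w_j)`. -/
noncomputable def wdep {ι J L : Type*} [Fintype J] [Fintype L] [Nonempty L] [DecidableEq L]
    (c : J → ι → ℝ) (d : J → L) (hd : ∃ i₁ i₂, d i₁ ≠ d i₂)
    (w : J → ℝ) (C : ℝ) (B : Finset ι) : ℝ :=
  (∑ j, w j * pos c d hd C B j) / (∑ j, w j)

theorem pdist_mono {ι : Type*} (x y : ι → ℝ) : Monotone fun B => pdist B x y :=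
  fun _ _ hB => Real.sqrt_le_sqrt <|
    sum_le_sum_of_subset_of_nonneg hB fun k _ _ => sq_nonneg (x k - y k)

theorem pos_mono {ι J L : Type*} [Fintype J] [Fintype L] [Nonempty L] [DecidableEq L]
    (c : J → ι → ℝ) (d : J → L) (hd : ∃ i₁ i₂, d i₁ ≠ d i₂) (C : ℝ) (j : J) :
    Monotone fun B => pos c d hd C B j :=
  fun _ _ hB => sup'_mono_fun fun _ _ =>
    mul_le_mul_of_nonneg_left (inf'_mono_fun fun i _ => pdist_mono (c i) (c j) hB)
      (one_div_nonneg.mpr (Real.sqrt_nonneg C))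

theorem wdep_mono_general {ι J L : Type*} [Fintype J] [Fintype L] [Nonempty L] [DecidableEq L]
    (c : J → ι → ℝ) (w : J → ℝ) (hw : ∀ j, 0 ≤ w j) (hw_sum : 0 < ∑ j, w j)
    (d : J → L) (hd : ∃ i₁ i₂, d i₁ ≠ d i₂) (C : ℝ) (_hC : 0 < C) :
    Monotone (wdep c d hd w C) := by
  intro B₁ B₂ hB
  have weighted_le : ∑ j, w j * pos c d hd C B₁ j ≤ ∑ j, w j * pos c d hd C B₂ j :=
    sum_le_sum fun j _ => mul_le_mul_of_nonneg_left (pos_mono c d hd C j hB) (hw j)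
  exact (div_le_div_iff_of_pos_right hw_sum).mpr weighted_le

/-- Property 3: if `B₁ ⊆ B₂` then the weighted granular-ball
fuzzy dependency is monotone: `W∂^C_{B₁} ≤ W∂^C_{B₂}`. -/
theorem wdep_mono {ι J L : Type*} [Fintype ι] [Fintype J] [Nonempty J]
    [Fintype L] [Nonempty L] [DecidableEq L]
    (c : J → ι → ℝ) (w : J → ℝ) (hw : ∀ i, 0 < w i)
    (d : J → L) (hd : ∃ i₁ i₂, d i₁ ≠ d i₂)
    (C : ℝ) (hC : 0 < C) (B₁ B₂ : Finset ι) (hB : B₁ ⊆ B₂) :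
    wdep c d hd w C B₁ ≤ wdep c d hd w C B₂ :=
  wdep_mono_general c w (fun i => (hw i).le) (sum_pos (fun i _ => hw i) univ_nonempty) d hd C hC hB
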